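/- arXiv:1807.01272 — 7 statements merged into one kernel-verified Lean document; each statement's English description precedes it below -/
import Mathlib

section
/- Let F be a field, let A be an m×n matrix over F[x], and let r be a natural number such that the rank of A (as a matrix over the fraction field F(x)) is at least r. Then the set of points α ∈ F for which the evaluated matrix A(α) over F has rank strictly less than r is finite and has cardinality at most r·deg(A). -/
open Polynomial Matrix

noncomputable section

variable {F : Type*} [Field F]

/-- Entrywise evaluation of a polynomial matrix at a point of `F`. -/
def matEval {m n : ℕ} (A : Matrix (Fin m) (Fin n) (Polynomial F)) (α : F) :
    Matrix (Fin m) (Fin n) F :=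
  A.map (Polynomial.eval α)

/-- `deg A`: the maximum of the degrees of the entries of `A`. -/
def matDeg {m n : ℕ} (A : Matrix (Fin m) (Fin n) (Polynomial F)) : ℕ :=
  Finset.univ.sup fun p : Fin m × Fin n => (A p.1 p.2).natDegree

/-- The rank of a polynomial matrix, i.e. its rank as a matrix over the
fraction field `F(x)` (represented by `RatFunc F`). -/
def polyRank {m n : ℕ} (A : Matrix (Fin m) (Fin n) (Polynomial F)) : ℕ :=
  (A.map (algebraMap (Polynomial F) (RatFunc F))).rank

/-!
If `A` has rank at least `r` over a field to which `F[x]` maps, then some `r × r` minor of `A` is a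
nonzero polynomial. It is a sum of products of `r` entries, so its degree is at most `r * deg A`.
Evaluation commutes with minors, hence `A(α)` can have rank below `r` only when `α` is one of the at
most `r * deg A` roots of this minor.
-/

theorem exists_linearIndependent_comp_of_le_finrank_span {K V ι : Type*} [DivisionRing K]
    [AddCommGroup V] [Module K V] {r : ℕ} (v : ι → V)
    (h : r ≤ Module.finrank K (Submodule.span K (Set.range v))) :
    ∃ f : Fin r → ι, LinearIndependent K (v ∘ f) := by
  obtain rfl | hr := r.eq_zero_or_pos
  · exact ⟨Fin.elim0, linearIndependent_empty_type⟩
  have : Module.Finite K (Submodule.span K (Set.range v)) :=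
    Module.finite_of_finrank_pos (hr.trans_le h)
  obtain ⟨b, hb_mem, -, hb⟩ := Submodule.exists_fun_fin_finrank_span_eq K (Set.range v)
  choose g hg using hb_mem
  have hvg : v ∘ g = b := funext hg
  refine ⟨g ∘ Fin.castLE h, ?_⟩
  rw [← Function.comp_assoc, hvg]
  exact hb.comp _ (Fin.castLE_injective h)

theorem exists_det_submatrix_ne_zero_of_le_rank {K m n : Type*} [Field K] [Finite m] [Fintype n]
    {r : ℕ} (B : Matrix m n K) (h : r ≤ B.rank) :
    ∃ (f : Fin r → m) (g : Fin r → n), (B.submatrix f g).det ≠ 0 := by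
  rw [rank_eq_finrank_span_row] at h
  obtain ⟨f, hf⟩ := exists_linearIndependent_comp_of_le_finrank_span B.row h
  have hrank : (B.submatrix f id).rank = r := by
    simpa using LinearIndependent.rank_matrix (M := B.submatrix f id) hf
  rw [rank_eq_finrank_span_cols] at hrank
  obtain ⟨g, hg⟩ :=
    exists_linearIndependent_comp_of_le_finrank_span (B.submatrix f id).col hrank.ge
  have hunit : IsUnit (B.submatrix f g) := linearIndependent_cols_iff_isUnit.1 hg
  exact ⟨f, g, ((isUnit_iff_isUnit_det _).1 hunit).ne_zero⟩

theorem card_le_rank_of_det_submatrix_ne_zero {R l m n : Type*} [CommRing R] [IsDomain R]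
    [Fintype l] [DecidableEq l] [Fintype n] (B : Matrix m n R) (f : l → m) (g : l → n)
    (h : (B.submatrix f g).det ≠ 0) : Fintype.card l ≤ B.rank :=
  (rank_of_det_ne_zero h).ge.trans (rank_submatrix_le B f g)

theorem natDegree_det_le_card_mul {R n : Type*} [CommRing R] [Fintype n] [DecidableEq n] {d : ℕ}
    (A : Matrix n n R[X]) (hA : ∀ i j, (A i j).natDegree ≤ d) :
    A.det.natDegree ≤ Fintype.card n * d := by
  rw [det_apply]
  refine natDegree_sum_le_of_forall_le _ _ fun σ _ => ?_
  calc (Equiv.Perm.sign σ • ∏ i, A (σ i) i).natDegree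
      ≤ (∏ i, A (σ i) i).natDegree := natDegree_smul_le _ _
    _ ≤ ∑ i, (A (σ i) i).natDegree := natDegree_prod_le _ _
    _ ≤ ∑ _i : n, d := Finset.sum_le_sum fun i _ => hA (σ i) i
    _ = Fintype.card n * d := by simp

theorem isRoot_det_submatrix_of_rank_map_eval_lt {R l m n : Type*} [CommRing R] [IsDomain R]
    [Fintype l] [DecidableEq l] [Fintype n] (A : Matrix m n R[X]) (f : l → m) (g : l → n) {α : R}
    (h : (A.map (eval α)).rank < Fintype.card l) : (A.submatrix f g).det.IsRoot α := by
  have heval : (A.submatrix f g).det.eval α = ((A.map (eval α)).submatrix f g).det :=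
    (evalRingHom α).map_det (A.submatrix f g)
  rw [IsRoot.def, heval]
  contrapose! h
  exact card_le_rank_of_det_submatrix_ne_zero _ f g h

theorem rank_eval_drop_finite_general {R K m n : Type*} [CommRing R] [IsDomain R] [Field K]
    [Finite m] [Fintype n] {r d : ℕ} (φ : R[X] →+* K) (A : Matrix m n R[X])
    (hd : ∀ i j, (A i j).natDegree ≤ d) (hr : r ≤ (A.map φ).rank) :
    {α : R | (A.map (eval α)).rank < r}.Finite ∧
      {α : R | (A.map (eval α)).rank < r}.ncard ≤ r * d := by
  obtain ⟨f, g, hdet⟩ := exists_det_submatrix_ne_zero_of_le_rank _ hr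
  set p : R[X] := (A.submatrix f g).det
  have hp : p ≠ 0 := by
    have hmap : φ p = ((A.map φ).submatrix f g).det := φ.map_det (A.submatrix f g)
    exact ne_zero_of_map (hmap.trans_ne hdet)
  have hroots : {α : R | (A.map (eval α)).rank < r} ⊆ p.rootSet R := fun α hα =>
    (mem_rootSet_of_ne hp).2 <| isRoot_det_submatrix_of_rank_map_eval_lt A f g <| by simpa using hα
  refine ⟨(p.rootSet_finite R).subset hroots, ?_⟩
  calc {α : R | (A.map (eval α)).rank < r}.ncard
      ≤ (p.rootSet R).ncard := Set.ncard_le_ncard hroots (p.rootSet_finite R)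
    _ ≤ p.natDegree := p.ncard_rootSet_le R
    _ ≤ r * d := by
      simpa using natDegree_det_le_card_mul (A.submatrix f g) fun i j => hd (f i) (g j)

theorem natDegree_le_matDeg {m n : ℕ} (A : Matrix (Fin m) (Fin n) F[X]) (i : Fin m) (j : Fin n) :
    (A i j).natDegree ≤ matDeg A :=
  Finset.le_sup (f := fun p : Fin m × Fin n => (A p.1 p.2).natDegree) (Finset.mem_univ (i, j))

/-- if `rank(A) ≥ r` then the set of `α ∈ F` with
`rank(A(α)) < r` is finite of cardinality at most `r * deg(A)`. -/
theorem rank_eval_drop_finite {m n r : ℕ}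
    (A : Matrix (Fin m) (Fin n) (Polynomial F))
    (hr : r ≤ polyRank A) :
    {α : F | (matEval A α).rank < r}.Finite ∧
      {α : F | (matEval A α).rank < r}.ncard ≤ r * matDeg A :=
  rank_eval_drop_finite_general (algebraMap F[X] (RatFunc F)) A (natDegree_le_matDeg A) hr
end
end

section
/- Let F be a field, n ≥ 1, and v ∈ F(x)^n a vector of rational functions such that denom(v) ≠ 1 (equivalently, some entry of v is not a polynomial). Let S ⊆ F be a finite nonempty subset. Then the number of vectors w ∈ S^n (entries in S) such that the inner product v·w = Σᵢ vᵢ·wᵢ lies in F[x] is at most (#S)^(n−1). -/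
open Polynomial

/-!
If `v i` lies outside a subspace `U`, then a combination `∑ j, w j • v j` in `U` determines `w i`
from the other coordinates: for two such `w` that differ only at `i`, the difference of the
combinations is a nonzero multiple of `v i` in `U`. Here `U` is the `F`-subspace `F[x]` of `F(x)`,
whose elements all have denominator `1`.
-/

theorem ncard_le_card_pow_of_injOn_domRestrict {ι α : Type*} {s : Set ι} [Finite s]
    {S : Finset α} {A : Set (ι → α)} (hAS : ∀ w ∈ A, ∀ j ∈ s, w j ∈ S)
    (hA : A.InjOn s.domRestrict) : A.ncard ≤ S.card ^ s.ncard := by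
  classical
  have := Fintype.ofFinite s
  calc
    A.ncard ≤ (Fintype.piFinset fun _ : s => S : Set (s → α)).ncard :=
      Set.ncard_le_ncard_of_injOn s.domRestrict
        (fun w hw => Finset.mem_coe.2 <| Fintype.mem_piFinset.2 fun j => hAS w hw j j.2) hA
        (Finset.finite_toSet _)
    _ = S.card ^ s.ncard := by
      rw [Set.ncard_coe_finset, Fintype.card_piFinset, Finset.prod_const, Finset.card_univ,
        Fintype.card_eq_nat_card, Nat.card_coe_set_eq]

theorem injOn_domRestrict_setOf_sum_smul_mem {ι K V : Type*} [Fintype ι] [DivisionRing K]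
    [AddCommGroup V] [Module K V] {U : Submodule K V} {v : ι → V} {i : ι} (hi : v i ∉ U) :
    {w : ι → K | ∑ j, w j • v j ∈ U}.InjOn (Set.domRestrict {i}ᶜ) := by
  intro w hw w' hw' h
  have h_off (j : ι) (hj : j ≠ i) : w j = w' j := congrFun h ⟨j, hj⟩
  have h_sub : ∑ j, w j • v j - ∑ j, w' j • v j = (w i - w' i) • v i := by
    rw [← Finset.sum_sub_distrib,
      Fintype.sum_eq_single i fun j hj => by rw [h_off j hj, sub_self], sub_smul]
  have h_at : w i = w' i := by
    by_contra hne
    exact hi ((U.smul_mem_iff (sub_ne_zero.2 hne)).1 (h_sub ▸ U.sub_mem hw hw'))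
  funext j
  obtain rfl | hj := eq_or_ne j i
  exacts [h_at, h_off j hj]

theorem card_polynomial_innerprod_le_general {ι K V : Type*} [Fintype ι] [DivisionRing K]
    [AddCommGroup V] [Module K V] (U : Submodule K V) (v : ι → V) (hv : ∃ i, v i ∉ U)
    (S : Finset K) :
    {w : ι → K | (∀ i, w i ∈ S) ∧ ∑ i, w i • v i ∈ U}.ncard ≤
      S.card ^ (Fintype.card ι - 1) := by
  obtain ⟨i, hi⟩ := hv
  have hcard : ({i}ᶜ : Set ι).ncard = Fintype.card ι - 1 := by
    rw [Set.ncard_compl, Set.ncard_singleton, Nat.card_eq_fintype_card]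
  rw [← hcard]
  exact ncard_le_card_pow_of_injOn_domRestrict (fun _ hw j _ => hw.1 j)
    ((injOn_domRestrict_setOf_sum_smul_mem hi).mono fun _ hw => hw.2)

theorem denom_eq_one_of_mem_range {F : Type*} [Field F] {f : RatFunc F}
    (hf : f ∈ (IsScalarTower.toAlgHom F F[X] (RatFunc F)).toLinearMap.range) : f.denom = 1 := by
  obtain ⟨p, rfl⟩ := hf
  exact RatFunc.denom_algebraMap p

/-- if `v ∈ F(x)^n` has some non-polynomial entry
(equivalently `denom(v) ≠ 1`), then the number of vectors `w ∈ S^n` whose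
inner product with `v` is a polynomial is at most `(#S)^(n-1)`. -/
theorem card_polynomial_innerprod_le {F : Type*} [Field F] {n : ℕ} (hn : 1 ≤ n)
    (v : Fin n → RatFunc F)
    (hv : ∃ i, (v i).denom ≠ 1)
    (S : Finset F) (hS : S.Nonempty) :
    {w : Fin n → F | (∀ i, w i ∈ S) ∧
        ∃ p : Polynomial F,
          algebraMap (Polynomial F) (RatFunc F) p
            = ∑ i, v i * algebraMap F (RatFunc F) (w i)}.ncard
      ≤ S.card ^ (n - 1) := by
  simpa [Algebra.smul_def, mul_comm] using
    card_polynomial_innerprod_le_general _ v (hv.imp fun _ => mt denom_eq_one_of_mem_range) S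
end

section
/- Let F be a field, A ∈ F[x]^{m×n} with rank r (over F(x)), v ∈ F[x]^{1×n} a row vector, C₁, …, C_t ∈ F[x]^{r×m} matrices, and d₁, …, d_t ∈ F[x] polynomials such that for every i = 1, …, t: (a) rank(CᵢA) = rank(A) = r, and (b) dᵢ·v ∈ rowsp_{F[x]}(CᵢA). If gcd(d₁, …, d_t) = 1, then v ∈ rowsp_{F[x]}(A). -/
open Polynomial Matrix

noncomputable section

variable {F : Type*} [Field F]

/-!
Left multiplication by `Cᵢ` only combines rows, so `dᵢ • v` lies in the row space of `A` itself.
The scalars `g` with `g • v` in this row space form an ideal. It contains every `dᵢ`, and in the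
principal ideal ring `F[x]` coprime elements generate the unit ideal, so it contains `1`.
-/

theorem span_eq_top_iff_forall_dvd_isUnit {R : Type*} [CommSemiring R] (s : Set R)
    [(Ideal.span s).IsPrincipal] :
    Ideal.span s = ⊤ ↔ ∀ g : R, (∀ a ∈ s, g ∣ a) → IsUnit g := by
  rw [← Ideal.span_singleton_generator (Ideal.span s), Ideal.span_singleton_eq_top]
  simp_rw [← Submodule.IsPrincipal.dvd_generator_span_iff]
  exact ⟨fun hunit _ hdvd => isUnit_of_dvd_unit hdvd hunit, fun h => h _ dvd_rfl⟩

theorem range_vecMulLinear_mul_le {R l m n : Type*} [Semiring R] [Fintype l]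
    [Fintype m] (C : Matrix l m R) (A : Matrix m n R) :
    LinearMap.range (C * A).vecMulLinear ≤ LinearMap.range A.vecMulLinear := by
  rintro _ ⟨p, rfl⟩
  exact ⟨p ᵥ* C, vecMul_vecMul p C A⟩

theorem rowmem_of_coprime_denoms_general {R ι m n : Type*} {l : ι → Type*} [CommSemiring R]
    [Fintype m] [∀ i, Fintype (l i)] (A : Matrix m n R) (v : n → R)
    (C : ∀ i, Matrix (l i) m R) (d : ι → R)
    (hmem : ∀ i, ∃ p : l i → R, p ᵥ* (C i * A) = d i • v)
    (hspan : Ideal.span (Set.range d) = ⊤) :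
    ∃ p : m → R, p ᵥ* A = v := by
  have hsmul (i : ι) : d i • v ∈ LinearMap.range A.vecMulLinear :=
    range_vecMulLinear_mul_le (C i) A (hmem i)
  exact Submodule.mem_of_span_top_of_smul_mem _ _ hspan v <|
    Set.forall_subtype_range_iff.mpr hsmul

/-- if `rank(A) = r`, each `Cᵢ·A` has rank `r`, each
`dᵢ·v ∈ rowsp_{F[x]}(Cᵢ·A)`, and `gcd(d₁,…,d_t) = 1` (i.e. every common
divisor of the `dᵢ` is a unit), then `v ∈ rowsp_{F[x]}(A)`. -/
theorem rowmem_of_coprime_denoms {m n r t : ℕ}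
    (A : Matrix (Fin m) (Fin n) (Polynomial F))
    (hrank : polyRank A = r)
    (v : Fin n → Polynomial F)
    (Cmat : Fin t → Matrix (Fin r) (Fin m) (Polynomial F))
    (d : Fin t → Polynomial F)
    (hranks : ∀ i, polyRank (Cmat i * A) = r)
    (hmem : ∀ i, ∃ p : Fin r → Polynomial F, p ᵥ* (Cmat i * A) = d i • v)
    (hgcd : ∀ g : Polynomial F, (∀ i, g ∣ d i) → IsUnit g) :
    ∃ p : Fin m → Polynomial F, p ᵥ* A = v :=
  rowmem_of_coprime_denoms_general A v Cmat d hmem <|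
    (span_eq_top_iff_forall_dvd_isUnit _).mpr <| by simpa only [Set.forall_mem_range] using hgcd
end
end

section
/- Let F be a field, A ∈ F[x]^{m×n} a matrix with full row rank m (over F(x)), and u ∈ F[x]^{1×m}, v ∈ F[x]^{1×n} row vectors over F[x] with u·A = v. Then every entry of u has degree at most m·deg(A) + deg(v). -/
open Polynomial Matrix

noncomputable section

variable {F : Type*} [Field F]

/-- `deg v`: the maximum of the degrees of the entries of the vector `v`. -/
def vecDeg {n : ℕ} (v : Fin n → Polynomial F) : ℕ :=
  Finset.univ.sup fun j => (v j).natDegree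

/-!
Full row rank gives a nonzero maximal minor `D`, on some choice of `m` columns. By Cramer's rule
`u i * D` is the same minor with row `i` of `A` replaced by the row of entries of `v`, so the
Leibniz formula bounds its degree by `(m - 1) * deg A + deg v`; since `D ≠ 0`, this bounds the
degree of `u i`.
-/

theorem linearIndependent_row_map_algebraMap_iff {R K ι κ : Type*} [CommRing R] [Field K]
    [Algebra R K] [IsFractionRing R K] {A : Matrix ι κ R} :
    LinearIndependent K (A.map (algebraMap R K)).row ↔ LinearIndependent R A.row := by
  rw [← LinearIndependent.iff_fractionRing R K]
  have hinj : Function.Injective ((Algebra.linearMap R K).compLeft κ) :=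
    (IsFractionRing.injective R K).comp_left
  exact LinearMap.linearIndependent_iff_of_injOn ((Algebra.linearMap R K).compLeft κ) hinj.injOn

theorem exists_det_submatrix_ne_zero_of_field {K ι κ : Type*} [Field K] [Fintype ι]
    [DecidableEq ι] {A : Matrix ι κ K} (hA : LinearIndependent K A.row) :
    ∃ g : ι → κ, (A.submatrix id g).det ≠ 0 := by
  have hspan : Submodule.span K (Set.range A.col) = ⊤ :=
    span_flip_eq_top_iff_linearIndependent.mpr hA
  obtain ⟨κ', c, -, hc_span, hc⟩ := exists_linearIndependent' K A.col
  let b : Module.Basis κ' K (ι → K) := .mk hc (hc_span.trans hspan).ge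
  let e : ι ≃ κ' := (Pi.basisFun K ι).indexEquiv b
  have hcols : LinearIndependent K (A.submatrix id (c ∘ e)).col := hc.comp e e.injective
  rw [linearIndependent_cols_iff_isUnit, isUnit_iff_isUnit_det] at hcols
  exact ⟨c ∘ e, hcols.ne_zero⟩

theorem exists_det_submatrix_ne_zero {R ι κ : Type*} [CommRing R] [IsDomain R] [Fintype ι]
    [DecidableEq ι] {A : Matrix ι κ R} (hA : LinearIndependent R A.row) :
    ∃ g : ι → κ, (A.submatrix id g).det ≠ 0 := by
  obtain ⟨g, hg⟩ := exists_det_submatrix_ne_zero_of_field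
    (linearIndependent_row_map_algebraMap_iff (K := FractionRing R).mpr hA)
  refine ⟨g, fun hdet => hg ?_⟩
  rw [submatrix_map, ← RingHom.mapMatrix_apply, ← RingHom.map_det, hdet, map_zero]

section Determinant

variable {R ι : Type*} [CommRing R] [Fintype ι] [DecidableEq ι]

theorem det_updateRow_vecMul (A : Matrix ι ι R) (u : ι → R) (i : ι) :
    (A.updateRow i (u ᵥ* A)).det = u i * A.det := by
  rw [vecMul_eq_sum, det_updateRow_sum, smul_eq_mul]

theorem natDegree_det_le_sum {A : Matrix ι ι R[X]} {d : ι → ℕ}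
    (hd : ∀ i j, (A i j).natDegree ≤ d i) : A.det.natDegree ≤ ∑ i, d i := by
  rw [det_apply]
  refine natDegree_sum_le_of_forall_le _ _ fun σ _ => ?_
  calc (Equiv.Perm.sign σ • ∏ i, A (σ i) i).natDegree
      ≤ (∏ i, A (σ i) i).natDegree := natDegree_smul_le _ _
    _ ≤ ∑ i, (A (σ i) i).natDegree := natDegree_prod_le _ _
    _ ≤ ∑ i, d (σ i) := Finset.sum_le_sum fun i _ => hd (σ i) i
    _ = ∑ i, d i := Equiv.sum_comp σ d

theorem natDegree_det_updateRow_le {A : Matrix ι ι R[X]} {w : ι → R[X]} {d : ι → ℕ} {e : ℕ}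
    {i : ι} (hd : ∀ k ≠ i, ∀ j, (A k j).natDegree ≤ d k) (he : ∀ j, (w j).natDegree ≤ e) :
    (A.updateRow i w).det.natDegree ≤ ∑ k ∈ Finset.univ.erase i, d k + e := by
  have hrow (k j) : (A.updateRow i w k j).natDegree ≤ Function.update d i e k := by
    obtain rfl | hk := eq_or_ne k i
    · simpa using he j
    · simpa [hk] using hd k hk j
  calc (A.updateRow i w).det.natDegree
      ≤ ∑ k, Function.update d i e k := natDegree_det_le_sum hrow
    _ = ∑ k ∈ Finset.univ.erase i, d k + e := by
      rw [Finset.sum_update_of_mem (Finset.mem_univ i), Finset.sdiff_singleton_eq_erase, add_comm]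

theorem natDegree_le_of_natDegree_vecMul_le [NoZeroDivisors R] {A : Matrix ι ι R[X]}
    (hA : A.det ≠ 0) {u : ι → R[X]} {d : ι → ℕ} {e : ℕ}
    (hd : ∀ i j, (A i j).natDegree ≤ d i) (he : ∀ j, ((u ᵥ* A) j).natDegree ≤ e) (i : ι) :
    (u i).natDegree ≤ ∑ k ∈ Finset.univ.erase i, d k + e := by
  obtain hu | hu := eq_or_ne (u i) 0
  · simp [hu]
  calc (u i).natDegree
      ≤ (u i * A.det).natDegree := natDegree_le_of_dvd (dvd_mul_right _ _) (mul_ne_zero hu hA)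
    _ = (A.updateRow i (u ᵥ* A)).det.natDegree := by rw [det_updateRow_vecMul]
    _ ≤ ∑ k ∈ Finset.univ.erase i, d k + e :=
      natDegree_det_updateRow_le (fun k _ => hd k) he

end Determinant

theorem solution_degree_bound_general {R ι κ : Type*} [CommRing R] [IsDomain R] [Fintype ι]
    [DecidableEq ι] {A : Matrix ι κ R[X]} (hA : LinearIndependent R[X] A.row) {u : ι → R[X]}
    {d : ι → ℕ} {e : ℕ} (hd : ∀ i j, (A i j).natDegree ≤ d i)
    (he : ∀ j, ((u ᵥ* A) j).natDegree ≤ e) (i : ι) :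
    (u i).natDegree ≤ ∑ k ∈ Finset.univ.erase i, d k + e := by
  obtain ⟨g, hg⟩ := exists_det_submatrix_ne_zero hA
  exact natDegree_le_of_natDegree_vecMul_le hg (fun k j => hd k (g j)) (fun j => he (g j)) i

theorem polyRank_eq_iff_linearIndependent_row {m n : ℕ} {A : Matrix (Fin m) (Fin n) F[X]} :
    polyRank A = m ↔ LinearIndependent F[X] A.row := by
  rw [polyRank, rank_eq_finrank_span_row,
    ← linearIndependent_row_map_algebraMap_iff (K := RatFunc F),
    linearIndependent_iff_card_eq_finrank_span, Fintype.card_fin, eq_comm, Set.finrank]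

theorem natDegree_le_vecDeg {n : ℕ} (v : Fin n → F[X]) (j : Fin n) :
    (v j).natDegree ≤ vecDeg v :=
  Finset.le_sup (f := fun j => (v j).natDegree) (Finset.mem_univ j)

/-- if `A` has full row rank `m` and `u·A = v` over `F[x]`,
then every entry of `u` has degree at most `m·deg(A) + deg(v)`. -/
theorem solution_degree_bound {m n : ℕ}
    (A : Matrix (Fin m) (Fin n) (Polynomial F))
    (hrank : polyRank A = m)
    (u : Fin m → Polynomial F) (v : Fin n → Polynomial F)
    (huv : u ᵥ* A = v) :
    ∀ i, (u i).natDegree ≤ m * matDeg A + vecDeg v := by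
  subst huv
  refine fun i => (solution_degree_bound_general (polyRank_eq_iff_linearIndependent_row.mp hrank)
    (natDegree_le_matDeg A) (natDegree_le_vecDeg _) i).trans ?_
  simpa using Nat.mul_le_mul_right (matDeg A) m.pred_le
end
end

section
/- Let F be a field, A ∈ F[x]^{m×n} a matrix with rank r (over F(x)), and K ∈ F[x]^{n×(n−r)} a matrix whose columns form an F[x]-basis of the right kernel {x ∈ F[x]^{n×1} : A·x = 0} of A. Then satur(A) equals the left kernel of K, i.e., satur(A) = {v ∈ F[x]^{1×n} : v·K = 0}. -/
open Polynomial Matrix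

noncomputable section

variable {F : Type*} [Field F]

/-- The `F[x]`-row space of `A`, as a set: `{p·A : p ∈ F[x]^{1×m}}`. -/
def rowSpanPoly {m n : ℕ} (A : Matrix (Fin m) (Fin n) (Polynomial F)) :
    Set (Fin n → Polynomial F) :=
  {v | ∃ p : Fin m → Polynomial F, p ᵥ* A = v}

/-- The saturation of `A`: the polynomial vectors lying in the
`F(x)`-row space of `A`. -/
def satur {m n : ℕ} (A : Matrix (Fin m) (Fin n) (Polynomial F)) :
    Set (Fin n → Polynomial F) :=
  {v | ∃ p : Fin m → RatFunc F,
      p ᵥ* (A.map (algebraMap (Polynomial F) (RatFunc F)))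
        = fun j => algebraMap (Polynomial F) (RatFunc F) (v j)}

/-- `A` is saturated when its saturation equals its `F[x]`-row space. -/
def IsSaturated {m n : ℕ} (A : Matrix (Fin m) (Fin n) (Polynomial F)) : Prop :=
  satur A = rowSpanPoly A

/-!
Over the fraction field, double orthogonality in `F(x)ⁿ` says that a vector lies in the row space
of `A` exactly when it is orthogonal to the right kernel of `A` over `F(x)`. Clearing denominators,
every vector of that kernel is a scalar multiple of a vector of the right kernel over `F[x]`, so a
polynomial vector only has to be tested against the latter, hence against any generating set of it,
such as the columns of `K`.
-/

section Field

variable {m n L : Type*} [Fintype n] [Field L]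

theorem mem_span_range_row_iff (A : Matrix m n L) (w : n → L) :
    w ∈ Submodule.span L (Set.range A.row) ↔ ∀ x, A *ᵥ x = 0 → w ⬝ᵥ x = 0 := by
  classical
  constructor
  · intro hw x hx
    have hrows : Submodule.span L (Set.range A.row) ≤
        LinearMap.ker (dotProductEquiv L n x) := by
      rw [Submodule.span_le]
      rintro _ ⟨i, rfl⟩
      exact (dotProduct_comm x (A i)).trans (congrFun hx i)
    exact (dotProduct_comm w x).trans (hrows hw)
  · intro hw
    have hforms : dotProductEquiv L n w ∈
        Submodule.span L (Set.range fun i ↦ dotProductEquiv L n (A.row i)) := by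
      refine FiniteDimensional.mem_span_of_iInf_ker_le_ker fun x hx ↦ hw x ?_
      ext i
      exact (Submodule.mem_iInf _).1 hx i
    rwa [Set.range_comp' (dotProductEquiv L n) A.row, Submodule.span_image_linearEquiv,
      Submodule.mem_map_equiv, LinearEquiv.symm_apply_apply] at hforms

end Field

section FractionField

variable {m n k R : Type*} (L : Type*) [CommRing R] [Field L] [Algebra R L]

/-- The saturation of `A` as an `R`-submodule of `n → R`: the vectors over `R` that lie in the
`L`-row space of `A`, where `L` is meant to be the fraction field of `R`. -/
def saturation (A : Matrix m n R) : Submodule R (n → R) :=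
  ((Submodule.span L (Set.range (A.map (algebraMap R L)).row)).restrictScalars R).comap
    ((Algebra.linearMap R L).compLeft n)

variable [IsFractionRing R L]

variable {L} in
theorem exists_smul_eq_algebraMap_comp [Finite n] (w : n → L) :
    ∃ d : L, d ≠ 0 ∧ ∃ x : n → R, d • w = algebraMap R L ∘ x := by
  obtain ⟨d, hd⟩ := IsLocalization.exist_integer_multiples_of_finite (nonZeroDivisors R) w
  choose x hx using hd
  refine ⟨algebraMap R L d, (IsLocalization.map_units L d).ne_zero, x, ?_⟩
  ext i
  exact (Algebra.smul_def _ _).symm.trans (hx i).symm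

variable [Fintype n]

theorem mem_saturation_iff (A : Matrix m n R) (v : n → R) :
    v ∈ saturation L A ↔ ∀ x, A *ᵥ x = 0 → v ⬝ᵥ x = 0 := by
  have hinj : Function.Injective (algebraMap R L) := IsFractionRing.injective R L
  have hker (x : n → R) :
      A.map (algebraMap R L) *ᵥ (algebraMap R L ∘ x) = 0 ↔ A *ᵥ x = 0 := by
    simp only [funext_iff, ← RingHom.map_mulVec, Pi.zero_apply, map_eq_zero_iff _ hinj]
  have hdot (x : n → R) : (algebraMap R L ∘ v) ⬝ᵥ (algebraMap R L ∘ x) = 0 ↔ v ⬝ᵥ x = 0 := by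
    rw [← RingHom.map_dotProduct, map_eq_zero_iff _ hinj]
  refine (mem_span_range_row_iff _ (algebraMap R L ∘ v)).trans ⟨fun h x hx ↦ ?_, fun h w hw ↦ ?_⟩
  · exact (hdot x).1 (h _ ((hker x).2 hx))
  · obtain ⟨d, hd, x, hx⟩ := exists_smul_eq_algebraMap_comp (R := R) w
    have hAx : A *ᵥ x = 0 := by rw [← hker, ← hx, mulVec_smul, hw, smul_zero]
    have hvx : d • ((algebraMap R L ∘ v) ⬝ᵥ w) = 0 := by
      rw [← dotProduct_smul, hx, hdot, h x hAx]
    exact (smul_eq_zero_iff_right hd).1 hvx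

theorem satur_eq_leftKernel_general (A : Matrix m n R) (K : Matrix n k R)
    (hK : LinearMap.ker A.mulVecLin = Submodule.span R (Set.range K.col)) :
    saturation L A = LinearMap.ker K.vecMulLinear := by
  ext v
  calc v ∈ saturation L A
    _ ↔ LinearMap.ker A.mulVecLin ≤ LinearMap.ker (dotProductBilin R R v) :=
      mem_saturation_iff L A v
    _ ↔ ∀ j, v ⬝ᵥ K.col j = 0 := by
      rw [hK, Submodule.span_le, Set.range_subset_iff]
      rfl
    _ ↔ v ∈ LinearMap.ker K.vecMulLinear := funext_iff.symm

end FractionField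

theorem coe_saturation_eq_satur {m n : ℕ} (A : Matrix (Fin m) (Fin n) (Polynomial F)) :
    (saturation (RatFunc F) A : Set (Fin n → Polynomial F)) = satur A := by
  rw [saturation, ← range_vecMulLinear]
  rfl

/-- if the columns of `K` form an `F[x]`-basis of the right
kernel of `A` (with `rank(A) = r`), then `satur(A)` is the left kernel
of `K`. -/
theorem satur_eq_leftKernel {m n r : ℕ}
    (A : Matrix (Fin m) (Fin n) (Polynomial F))
    (hrank : polyRank A = r)
    (K : Matrix (Fin n) (Fin (n - r)) (Polynomial F))
    (hKindep : LinearIndependent (Polynomial F) fun j : Fin (n - r) => Kᵀ j)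
    (hKspan : ∀ x : Fin n → Polynomial F,
        A.mulVec x = 0 ↔ ∃ c : Fin (n - r) → Polynomial F, K.mulVec c = x) :
    satur A = {v : Fin n → Polynomial F | v ᵥ* K = 0} := by
  have hK : LinearMap.ker A.mulVecLin = Submodule.span (Polynomial F) (Set.range K.col) := by
    rw [← range_mulVecLin]
    exact Submodule.ext hKspan
  rw [← coe_saturation_eq_satur, satur_eq_leftKernel_general (RatFunc F) A K hK]
  rfl
end
end

section
/- Let F be a field and A ∈ F[x]^{m×n} a matrix with full row rank m (over F(x)). Then A is saturated if and only if the F[x]-column space of A equals F[x]^{m×1}, i.e., if and only if there exists V ∈ F[x]^{n×m} with A·V = I_m. -/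
open Polynomial Matrix

noncomputable section

variable {F : Type*} [Field F]

/-!
Clearing denominators identifies the saturation of `A` modulo its row space with the torsion of
`Rⁿ / rowsp A`, so `A` is saturated iff this quotient is torsion-free. Over a Dedekind domain such
as `F[X]`, a finitely generated torsion-free module is projective, so this means that the row space
is a direct summand of `Rⁿ`. When the rows of `A` are independent, `p ↦ p A` is injective, and its
image is a direct summand iff it has a linear left inverse, that is, a matrix `V` with `A V = 1`.
-/

section Splitting

variable {R M N : Type*} [CommRing R] [AddCommGroup M] [Module R M] [AddCommGroup N] [Module R N]

theorem exists_comp_eq_id_iff_projective_quotient_range [Module.Projective R N] {f : M →ₗ[R] N}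
    (hf : Function.Injective f) :
    (∃ l : N →ₗ[R] M, l ∘ₗ f = LinearMap.id) ↔ Module.Projective R (N ⧸ LinearMap.range f) := by
  have hexact : Function.Exact f (LinearMap.range f).mkQ := LinearMap.exact_map_mkQ_range f
  have hsurj := (LinearMap.range f).mkQ_surjective
  exact ((hexact.split_tfae hf hsurj).out 1 0).trans ⟨fun ⟨s, hs⟩ ↦ .of_split s _ hs,
    fun _ ↦ Module.projective_lifting_property _ LinearMap.id hsurj⟩

theorem projective_iff_isTorsionFree_of_isDedekindDomain [IsDedekindDomain R]
    [Module.Finite R M] : Module.Projective R M ↔ Module.IsTorsionFree R M :=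
  have := Module.finitePresentation_of_finite R M
  ⟨fun _ ↦ inferInstance, fun _ ↦ Module.Flat.projective_of_finitePresentation⟩

end Splitting

section VecMul

variable {R m n : Type*} [Fintype m]

theorem vecMul_injective_iff_rank_eq_card [Field R] [Fintype n] {A : Matrix m n R} :
    Function.Injective A.vecMul ↔ A.rank = Fintype.card m := by
  rw [Matrix.vecMul_injective_iff, linearIndependent_iff_card_eq_finrank_span, Set.finrank,
    ← Matrix.rank_eq_finrank_span_row, eq_comm]

theorem vecMul_injective_of_map {S : Type*} [NonAssocSemiring R] [NonAssocSemiring S] {f : R →+* S}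
    (hf : Function.Injective f) {A : Matrix m n R} (hA : Function.Injective (A.map f).vecMul) :
    Function.Injective A.vecMul := by
  intro p q (hpq : p ᵥ* A = q ᵥ* A)
  refine hf.comp_left (hA (funext fun j ↦ ?_))
  calc ((f ∘ p) ᵥ* A.map f) j = f ((p ᵥ* A) j) := (f.map_vecMul A p j).symm
    _ = f ((q ᵥ* A) j) := by rw [hpq]
    _ = ((f ∘ q) ᵥ* A.map f) j := f.map_vecMul A q j

theorem exists_comp_vecMulLinear_eq_id_iff_exists_mul_eq_one [Semiring R] [Fintype n]
    [DecidableEq m] {A : Matrix m n R} :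
    (∃ l : (n → R) →ₗ[R] (m → R), l ∘ₗ A.vecMulLinear = LinearMap.id) ↔
      ∃ V : Matrix n m R, A * V = 1 := by
  classical
  rw [Matrix.toLinearMapRight'.surjective.exists]
  refine exists_congr fun V ↦ ?_
  rw [← Matrix.toLinearMapRight'.injective.eq_iff, Matrix.toLinearMapRight'_mul,
    Matrix.toLinearMapRight'_one]
  rfl

end VecMul

section RowSaturation

open scoped nonZeroDivisors

variable {R m n : Type*} [CommRing R] [Fintype m] (K : Type*) [Field K] [Algebra R K]

/-- The saturation of the row space of `A`, for a matrix over a domain `R` with fraction field `K`: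
the vectors over `R` lying in the row space of `A` over `K`. It generalizes `satur`, which is the
case `R = F[X]`, `K = RatFunc F`. -/
def rowSaturation (A : Matrix m n R) : Submodule R (n → R) :=
  ((LinearMap.range (A.map (algebraMap R K)).vecMulLinear).restrictScalars R).comap
    ((Algebra.linearMap R K).compLeft n)

variable {K}

theorem mem_rowSaturation {A : Matrix m n R} {v : n → R} :
    v ∈ rowSaturation K A ↔
      ∃ p : m → K, p ᵥ* A.map (algebraMap R K) = fun j ↦ algebraMap R K (v j) :=
  Iff.rfl

variable [IsFractionRing R K]

theorem mem_rowSaturation_iff_exists_smul_mem_range {A : Matrix m n R} {v : n → R} :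
    v ∈ rowSaturation K A ↔ ∃ r : R⁰, r • v ∈ LinearMap.range A.vecMulLinear := by
  constructor
  · intro hv
    obtain ⟨p, hp⟩ := mem_rowSaturation.1 hv
    obtain ⟨r, hr⟩ := IsLocalization.exist_integer_multiples_of_finite R⁰ p
    choose q hq using hr
    have hqp : algebraMap R K ∘ q = algebraMap R K r • p :=
      funext fun i ↦ (hq i).trans (Algebra.smul_def _ _)
    refine ⟨r, q, funext fun j ↦ IsFractionRing.injective R K ?_⟩
    calc algebraMap R K ((q ᵥ* A) j) = ((algebraMap R K r • p) ᵥ* A.map (algebraMap R K)) j := by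
          rw [RingHom.map_vecMul, hqp]
      _ = algebraMap R K r * algebraMap R K (v j) := by
          rw [Matrix.smul_vecMul, Pi.smul_apply, smul_eq_mul, hp]
      _ = algebraMap R K ((r • v) j) := (map_mul _ _ _).symm
  · rintro ⟨r, q, hq⟩
    have hr : algebraMap R K r ≠ 0 := (IsLocalization.map_units K r).ne_zero
    refine mem_rowSaturation.2 ⟨(algebraMap R K r)⁻¹ • (algebraMap R K ∘ q), funext fun j ↦ ?_⟩
    have hqj : (q ᵥ* A) j = r * v j := congrFun hq j
    rw [Matrix.smul_vecMul, Pi.smul_apply, ← RingHom.map_vecMul, hqj, map_mul, smul_eq_mul,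
      inv_mul_cancel_left₀ hr]

theorem rowSaturation_eq_comap_torsion (A : Matrix m n R) :
    rowSaturation K A =
      (Submodule.torsion R ((n → R) ⧸ LinearMap.range A.vecMulLinear)).comap
        (LinearMap.range A.vecMulLinear).mkQ := by
  ext v
  rw [mem_rowSaturation_iff_exists_smul_mem_range, Submodule.mem_comap, Submodule.mem_torsion_iff]
  exact exists_congr fun r ↦ (Submodule.Quotient.mk_eq_zero _).symm

theorem rowSaturation_eq_range_iff_isTorsionFree [IsDomain R] {A : Matrix m n R} :
    rowSaturation K A = LinearMap.range A.vecMulLinear ↔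
      Module.IsTorsionFree R ((n → R) ⧸ LinearMap.range A.vecMulLinear) := by
  rw [rowSaturation_eq_comap_torsion, Submodule.isTorsionFree_iff_torsion_eq_bot,
    ← (Submodule.comap_injective_of_surjective (Submodule.mkQ_surjective _)).eq_iff,
    Submodule.comap_bot, Submodule.ker_mkQ]

theorem rowSaturation_eq_range_iff_exists_mul_eq_one [IsDedekindDomain R] [Fintype n]
    [DecidableEq m] {A : Matrix m n R} (hA : Function.Injective A.vecMul) :
    rowSaturation K A = LinearMap.range A.vecMulLinear ↔ ∃ V : Matrix n m R, A * V = 1 := by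
  rw [rowSaturation_eq_range_iff_isTorsionFree, ← projective_iff_isTorsionFree_of_isDedekindDomain,
    ← exists_comp_eq_id_iff_projective_quotient_range hA,
    exists_comp_vecMulLinear_eq_id_iff_exists_mul_eq_one]

theorem saturated_iff_colSpan_univ_of_fullRowRank_general [IsDedekindDomain R] [Fintype n]
    [DecidableEq m] (A : Matrix m n R)
    (hrank : (A.map (algebraMap R K)).rank = Fintype.card m) :
    (rowSaturation K A = LinearMap.range A.vecMulLinear ↔ Set.range A.mulVec = Set.univ) ∧
      (rowSaturation K A = LinearMap.range A.vecMulLinear ↔ ∃ V : Matrix n m R, A * V = 1) := by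
  have hA : Function.Injective A.vecMul :=
    vecMul_injective_of_map (IsFractionRing.injective R K)
      (vecMul_injective_iff_rank_eq_card.2 hrank)
  have hV := rowSaturation_eq_range_iff_exists_mul_eq_one (K := K) hA
  rw [Set.range_eq_univ, Matrix.mulVec_surjective_iff_exists_right_inverse]
  exact ⟨hV, hV⟩

end RowSaturation

theorem isSaturated_iff_rowSaturation_eq_range {m n : ℕ} {A : Matrix (Fin m) (Fin n) F[X]} :
    IsSaturated A ↔ rowSaturation (RatFunc F) A = LinearMap.range A.vecMulLinear := by
  rw [← SetLike.coe_set_eq]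
  rfl

/-- a polynomial matrix with full row rank `m` is saturated if
and only if its `F[x]`-column space is all of `F[x]^{m×1}`, i.e. if and only
if `A·V = I` for some polynomial matrix `V`. -/
theorem saturated_iff_colSpan_univ_of_fullRowRank {m n : ℕ}
    (A : Matrix (Fin m) (Fin n) (Polynomial F))
    (hrank : polyRank A = m) :
    (IsSaturated A ↔
        {b : Fin m → Polynomial F | ∃ q : Fin n → Polynomial F, A.mulVec q = b}
          = Set.univ) ∧
      (IsSaturated A ↔ ∃ V : Matrix (Fin n) (Fin m) (Polynomial F), A * V = 1) := by
  rw [isSaturated_iff_rowSaturation_eq_range]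
  exact saturated_iff_colSpan_univ_of_fullRowRank_general A (hrank.trans (Fintype.card_fin m).symm)
end
end

section
/- Let F be a field, K ∈ F[x]^{n×ℓ}, and B ∈ F[x]^{r×n} a matrix whose rows form an F[x]-basis of the left kernel {p ∈ F[x]^{1×n} : p·K = 0} of K. Then the F[x]-column space of B equals F[x]^{r×1}; equivalently, there exists V ∈ F[x]^{n×r} with B·V = I_r. -/
open Polynomial Matrix

noncomputable section

/-
A basis of the kernel of `K` makes `B` and `K` into an exact sequence `0 → R^r → R^m → im K → 0` of
row modules. It splits as soon as `im K` is projective, and a retraction `R^m → R^r` of `B` is a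
right inverse of the matrix `B`, because `M ↦ (x ↦ x M)` reverses products. Over `F[X]`, a principal
ideal domain, the submodule `im K` of a free module is free.
-/

section Splitting

variable {R M N P : Type*} [Ring R] [AddCommGroup M] [AddCommGroup N] [AddCommGroup P]
  [Module R M] [Module R N] [Module R P]

theorem exists_leftInverse_of_exact_of_projective_range {f : M →ₗ[R] N} {g : N →ₗ[R] P}
    [Module.Projective R (LinearMap.range g)] (hf : Function.Injective f)
    (hfg : Function.Exact f g) : ∃ h : N →ₗ[R] M, h ∘ₗ f = LinearMap.id := by
  have hexact : Function.Exact f g.rangeRestrict := by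
    rw [LinearMap.exact_iff, LinearMap.ker_rangeRestrict, hfg.linearMap_ker_eq]
  have hsection : ∃ s, g.rangeRestrict ∘ₗ s = LinearMap.id :=
    g.rangeRestrict.exists_rightInverse_of_surjective g.range_rangeRestrict
  exact ((hexact.split_tfae hf g.surjective_rangeRestrict).out 0 1).mp hsection

end Splitting

section RowModules

variable {R m r k : Type*} [Fintype m] [Fintype r] [DecidableEq r]

theorem exists_mul_eq_one_of_leftInverse_vecMulLinear [Semiring R] {B : Matrix r m R}
    {h : (m → R) →ₗ[R] r → R} (hh : h ∘ₗ B.vecMulLinear = LinearMap.id) :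
    ∃ V : Matrix m r R, B * V = 1 := by
  classical
  refine ⟨h.toMatrixRight', Matrix.toLinearMapRight'.injective ?_⟩
  rw [Matrix.toLinearMapRight'_mul, Matrix.toLinearMapRight'_one, LinearEquiv.symm_apply_apply]
  exact hh

theorem kernel_basis_colSpan_univ_general [Ring R] (K : Matrix m k R) (B : Matrix r m R)
    [Module.Projective R (LinearMap.range K.vecMulLinear)]
    (hBindep : LinearIndependent R B.row)
    (hBspan : ∀ p : m → R, p ᵥ* K = 0 ↔ ∃ q : r → R, q ᵥ* B = p) :
    {b : r → R | ∃ q : m → R, B *ᵥ q = b} = Set.univ ∧ ∃ V : Matrix m r R, B * V = 1 := by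
  have hinj : Function.Injective B.vecMulLinear := Matrix.vecMul_injective_iff.mpr hBindep
  have hexact : Function.Exact B.vecMulLinear K.vecMulLinear := hBspan
  obtain ⟨h, hh⟩ := exists_leftInverse_of_exact_of_projective_range hinj hexact
  have hV : ∃ V : Matrix m r R, B * V = 1 := exists_mul_eq_one_of_leftInverse_vecMulLinear hh
  exact ⟨Set.range_eq_univ.mpr (Matrix.mulVec_surjective_iff_exists_right_inverse.mpr hV), hV⟩

end RowModules

/-- if the rows of `B` form an `F[x]`-basis of the left kernel
of `K`, then the `F[x]`-column space of `B` is all of `F[x]^{r×1}`;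
equivalently there is `V` with `B·V = I`. -/
theorem kernel_basis_colSpan_univ {F : Type*} [Field F] {n ℓ r : ℕ}
    (K : Matrix (Fin n) (Fin ℓ) (Polynomial F))
    (B : Matrix (Fin r) (Fin n) (Polynomial F))
    (hBindep : LinearIndependent (Polynomial F) fun i : Fin r => B i)
    (hBspan : ∀ p : Fin n → Polynomial F,
        p ᵥ* K = 0 ↔ ∃ q : Fin r → Polynomial F, q ᵥ* B = p) :
    ({b : Fin r → Polynomial F | ∃ q : Fin n → Polynomial F, B.mulVec q = b}
        = Set.univ) ∧
      ∃ V : Matrix (Fin n) (Fin r) (Polynomial F), B * V = 1 :=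
  kernel_basis_colSpan_univ_general K B hBindep hBspan
end
end
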